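/- Let X be a topological space, let E be a finite-dimensional real normed vector space, and let B : X → (E →L[ℝ] E →L[ℝ] ℝ) be a continuous family of continuous bilinear forms on E. For x ∈ X define the index ind(x) ∈ ℕ as the supremum of finrank ℝ W over all subspaces W ⊆ E on which B x is negative definite, i.e. such that (B x) v v < 0 for every nonzero v ∈ W. Then the index is lower semicontinuous: for every x₀ ∈ X there is a neighborhood U of x₀ such that ind(x) ≥ ind(x₀) for all x ∈ U. -/

import Mathlib

/-- The index of the bilinear form `B x`: the supremum of the dimensions of the subspaces of `E`
on which `B x` is negative definite. -/
noncomputable def bilinIndex {X : Type*} {E : Type*}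
    [NormedAddCommGroup E] [NormedSpace ℝ E]
    (B : X → E →L[ℝ] E →L[ℝ] ℝ) (x : X) : ℕ :=
  sSup {k : ℕ | ∃ W : Submodule ℝ E,
    (∀ v ∈ W, v ≠ 0 → B x v v < 0) ∧ Module.finrank ℝ W = k}

/-- The dimensions of the negative definite subspaces of a form are bounded by the dimension of the
ambient space. -/
theorem bddAbove_finrank_negDef {E : Type*}
    [NormedAddCommGroup E] [NormedSpace ℝ E] [FiniteDimensional ℝ E] (b : E →L[ℝ] E →L[ℝ] ℝ) :
    BddAbove {k : ℕ | ∃ W : Submodule ℝ E,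
      (∀ v ∈ W, v ≠ 0 → b v v < 0) ∧ Module.finrank ℝ W = k} := by
  refine ⟨Module.finrank ℝ E, ?_⟩
  rintro _ ⟨W, -, rfl⟩
  exact W.finrank_le

/-- The supremum defining the index is attained. -/
theorem exists_negDef_finrank_eq_bilinIndex {X : Type*} {E : Type*}
    [NormedAddCommGroup E] [NormedSpace ℝ E] [FiniteDimensional ℝ E]
    (B : X → E →L[ℝ] E →L[ℝ] ℝ) (x : X) :
    ∃ W : Submodule ℝ E,
      (∀ v ∈ W, v ≠ 0 → B x v v < 0) ∧ Module.finrank ℝ W = bilinIndex B x := by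
  refine Nat.sSup_mem (s := {k : ℕ | ∃ W : Submodule ℝ E,
    (∀ v ∈ W, v ≠ 0 → B x v v < 0) ∧ Module.finrank ℝ W = k}) ?_ (bddAbove_finrank_negDef (B x))
  exact ⟨0, ⊥, fun v hv h => absurd ((Submodule.mem_bot ℝ).1 hv) h, finrank_bot ℝ E⟩

/-- A form is negative definite on a subspace as soon as it is negative on its unit vectors. -/
theorem negDef_of_forall_norm_eq_one {E : Type*}
    [NormedAddCommGroup E] [NormedSpace ℝ E] {b : E →L[ℝ] E →L[ℝ] ℝ} {W : Submodule ℝ E}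
    (h : ∀ v ∈ W, ‖v‖ = 1 → b v v < 0) : ∀ v ∈ W, v ≠ 0 → b v v < 0 := by
  intro v hv hv0
  have hpos : 0 < ‖v‖⁻¹ := inv_pos.2 (norm_pos_iff.2 hv0)
  have hneg := h (‖v‖⁻¹ • v) (W.smul_mem _ hv) (norm_smul_inv_norm (𝕜 := ℝ) hv0)
  simp only [map_smul, smul_apply, smul_eq_mul] at hneg
  by_contra! hnonneg
  exact hneg.not_ge (mul_nonneg hpos.le (mul_nonneg hpos.le hnonneg))

/-- Negative definiteness on a fixed subspace is an open condition on the form. -/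
theorem eventually_negDef {X : Type*} [TopologicalSpace X] {E : Type*}
    [NormedAddCommGroup E] [NormedSpace ℝ E] [FiniteDimensional ℝ E]
    {B : X → E →L[ℝ] E →L[ℝ] ℝ} (hB : Continuous B) {x₀ : X} {W : Submodule ℝ E}
    (hW : ∀ v ∈ W, v ≠ 0 → B x₀ v v < 0) :
    ∀ᶠ x in nhds x₀, ∀ v ∈ W, v ≠ 0 → B x v v < 0 := by
  have : ProperSpace E := FiniteDimensional.proper_real E
  have hK : IsCompact (Metric.sphere (0 : E) 1 ∩ W) :=
    (isCompact_sphere 0 1).inter_right W.closed_of_finiteDimensional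
  have hcont : Continuous fun p : X × E => B p.1 p.2 p.2 := by fun_prop
  have hev : ∀ᶠ x in nhds x₀, ∀ v ∈ Metric.sphere (0 : E) 1 ∩ W, B x v v < 0 := by
    refine hK.eventually_forall_of_forall_eventually fun v hv => ?_
    refine hcont.continuousAt.eventually_lt_const (hW v hv.2 ?_)
    exact ne_zero_of_mem_unit_sphere ⟨v, hv.1⟩
  filter_upwards [hev] with x hx
  exact negDef_of_forall_norm_eq_one fun v hv hv1 => hx v ⟨by simpa using hv1, hv⟩

/-- **Lower semicontinuity of the index of a continuous family of bilinear forms.** If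
`B : X → (E →L[ℝ] E →L[ℝ] ℝ)` is continuous and `E` is finite-dimensional, then each `x₀ ∈ X`
has a neighborhood `U` such that `ind (B x) ≥ ind (B x₀)` for all `x ∈ U`. -/
theorem bilinIndex_lower_semicontinuous
    {X : Type*} [TopologicalSpace X]
    {E : Type*} [NormedAddCommGroup E] [NormedSpace ℝ E] [FiniteDimensional ℝ E]
    (B : X → E →L[ℝ] E →L[ℝ] ℝ) (hB : Continuous B) (x₀ : X) :
    ∃ U ∈ nhds x₀, ∀ x ∈ U, bilinIndex B x₀ ≤ bilinIndex B x := by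
  obtain ⟨W, hW, hrank⟩ := exists_negDef_finrank_eq_bilinIndex B x₀
  refine ⟨_, eventually_negDef hB hW, fun x hx => ?_⟩
  exact le_csSup (bddAbove_finrank_negDef (B x)) ⟨W, hx, hrank⟩
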